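/- arXiv:1707.05875 — 4 statements merged into one kernel-verified Lean document; each statement's English description precedes it below -/
import Mathlib

section
/- Let f be a regular probability density on an interval [l,h] with 0 < l ≤ h < ∞, with CDF F(t) = ∫_{t'≤t} f(t') dt' and virtual value φ(t) = t − (1−F(t))/f(t). Then ∫_l^h [t·f(t) − (1 − F(t))]_+ dt ≤ sup_{r≥0} r·(1 − F(r)), i.e. the integral of the positive part of f·φ is at most the optimal posted-price (monopoly) revenue. -/
open MeasureTheory Set

/-!
Let `R r = r * (1 - F r)` be the revenue of the price `r`. The distribution function `F` is
absolutely continuous, so `R` is the integral of its almost everywhere derivative `-(f * φ)`. As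
`φ` changes sign at most once, from negative to nonnegative, at some price `r`, the integral of the
positive part of `f * φ` over `[l, h]` is `R r - R h = R r`. A negative `r` does no better than the
price `0`, since then `R r ≤ 0 = R 0`.
-/

/-- The expected revenue `r * (1 - F r)` of the posted price `r` against a buyer whose value has
density `f`, where `F` is the distribution function of `f`. -/
noncomputable def postedPriceRevenue (f : ℝ → ℝ) (r : ℝ) : ℝ :=
  r * (1 - ∫ t in Iic r, f t)

/-- Myerson's virtual value `t - (1 - F t) / f t`; it is meaningful only where `f t ≠ 0`. -/
noncomputable def virtualValue (f : ℝ → ℝ) (t : ℝ) : ℝ :=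
  t - (1 - ∫ t' in Iic t, f t') / f t

/-- The virtual value times the density, with the denominator cleared so that it is meaningful
also where the density vanishes. -/
noncomputable def weightedVirtualValue (f : ℝ → ℝ) (t : ℝ) : ℝ :=
  t * f t - (1 - ∫ t' in Iic t, f t')

theorem intervalIntegral_mul_sub_intervalIntegral {f : ℝ → ℝ} {a b : ℝ}
    (hf : IntervalIntegrable f volume a b) :
    ∫ t in a..b, (t * f t - ∫ s in t..b, f s) = a * ∫ s in a..b, f s := by
  set G : ℝ → ℝ := fun t => t * ∫ s in b..t, f s with hG
  have hG_ac : AbsolutelyContinuousOnInterval G a b :=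
    contDiff_id.contDiffOn.absolutelyContinuousOnInterval.fun_mul
      (hf.absolutelyContinuousOnInterval_intervalIntegral right_mem_uIcc)
  have hG_deriv : ∀ᵐ t, t ∈ uIcc a b → deriv G t = t * f t - ∫ s in t..b, f s := by
    filter_upwards [hf.ae_hasDerivAt_integral] with t ht htab
    have hprim := ht htab b right_mem_uIcc
    rw [((hasDerivAt_id' t).fun_mul hprim).deriv, intervalIntegral.integral_symm t b]
    ring
  calc ∫ t in a..b, (t * f t - ∫ s in t..b, f s)
      = ∫ t in a..b, deriv G t := by
        refine intervalIntegral.integral_congr_ae ?_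
        filter_upwards [hG_deriv] with t ht htab using (ht (uIoc_subset_uIcc htab)).symm
    _ = G b - G a := hG_ac.integral_deriv_eq_sub
    _ = a * ∫ s in a..b, f s := by
        simp [hG, intervalIntegral.integral_symm a b]

theorem integral_sub_setIntegral_Iic {E : Type*} [NormedAddCommGroup E] [NormedSpace ℝ E]
    {μ : Measure ℝ} {f : ℝ → E} {b : ℝ} (hf : Integrable f μ)
    (hsupp : Function.support f ⊆ Iic b) (t : ℝ) :
    (∫ x, f x ∂μ) - ∫ x in Iic t, f x ∂μ = ∫ x in t..b, f x ∂μ := by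
  rw [← setIntegral_eq_integral_of_forall_compl_eq_zero (s := Iic b) fun x hx =>
      Function.notMem_support.1 fun hxs => hx (hsupp hxs),
    intervalIntegral.integral_Iic_sub_Iic hf.integrableOn hf.integrableOn]

theorem exists_setIntegral_Icc_max_zero_eq_setIntegral_Ioc {α : Type*}
    [ConditionallyCompleteLinearOrder α] [TopologicalSpace α] [OrderClosedTopology α]
    [MeasurableSpace α] [OpensMeasurableSpace α] {μ : Measure α} [NullSingletonClass μ]
    {g : α → ℝ} {a b : α} (hg : MonotoneOn (fun t => 0 ≤ g t) (Icc a b)) :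
    ∃ c ≤ b, ∫ t in Icc a b, max (g t) 0 ∂μ = ∫ t in Ioc c b, g t ∂μ := by
  let S : Set α := {t ∈ Icc a b | 0 ≤ g t}
  rcases S.eq_empty_or_nonempty with hS_empty | hS_nonempty
  · refine ⟨b, le_rfl, ?_⟩
    rw [Ioc_self, setIntegral_empty]
    refine setIntegral_eq_zero_of_forall_eq_zero fun t ht => max_eq_right ?_
    by_contra! hpos
    exact hS_empty.subset ⟨ht, hpos.le⟩
  · have hS_bdd : BddBelow S := ⟨a, fun t ht => ht.1.1⟩
    have hS_above : Ioc (sInf S) b ⊆ S := fun t ht => by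
      obtain ⟨s, hs, hst⟩ := exists_lt_of_csInf_lt hS_nonempty ht.1
      have htab : t ∈ Icc a b := ⟨hs.1.1.trans hst.le, ht.2⟩
      exact ⟨htab, hg hs.1 htab hst.le hs.2⟩
    have hneg : ∀ᵐ t ∂μ, t ∈ Icc a b \ Ioc (sInf S) b → max (g t) 0 = 0 := by
      filter_upwards [Measure.ae_ne μ (sInf S)] with t hne ht
      refine max_eq_right ?_
      by_contra! hpos
      exact ht.2 ⟨(csInf_le hS_bdd ⟨ht.1, hpos.le⟩).lt_of_ne' hne, ht.1.2⟩
    refine ⟨sInf S, hS_nonempty.elim fun s hs => (csInf_le hS_bdd hs).trans hs.1.2, ?_⟩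
    rw [setIntegral_eq_of_subset_of_ae_sdiff_eq_zero nullMeasurableSet_Icc
      (fun t ht => (hS_above ht).1) hneg]
    exact setIntegral_congr_fun measurableSet_Ioc fun t ht => max_eq_left (hS_above ht).2

section Regularity

variable {f : ℝ → ℝ}

theorem mul_virtualValue {t : ℝ} (ht : f t ≠ 0) :
    f t * virtualValue f t = weightedVirtualValue f t := by
  rw [virtualValue, weightedVirtualValue, mul_sub, mul_div_cancel₀ _ ht, mul_comm]

theorem weightedVirtualValue_nonneg_iff {t : ℝ} (ht : 0 < f t) :
    0 ≤ weightedVirtualValue f t ↔ 0 ≤ virtualValue f t := by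
  rw [← mul_virtualValue ht.ne', mul_nonneg_iff_of_pos_left ht]

theorem monotoneOn_weightedVirtualValue_nonneg {s : Set ℝ} (hf_pos : ∀ t ∈ s, 0 < f t)
    (hf_reg : MonotoneOn (virtualValue f) s) :
    MonotoneOn (fun t => 0 ≤ weightedVirtualValue f t) s := fun t ht u hu htu hnonneg =>
  (weightedVirtualValue_nonneg_iff (hf_pos u hu)).2 <|
    ((weightedVirtualValue_nonneg_iff (hf_pos t ht)).1 hnonneg).trans (hf_reg ht hu htu)

end Regularity

section Revenue

variable {f : ℝ → ℝ} {h : ℝ}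

theorem intervalIntegral_weightedVirtualValue (hf : Integrable f)
    (hf_supp : Function.support f ⊆ Iic h) (hf_prob : ∫ t, f t = 1) (r : ℝ) :
    ∫ t in r..h, weightedVirtualValue f t = postedPriceRevenue f r := by
  have htail (t : ℝ) : 1 - ∫ s in Iic t, f s = ∫ s in t..h, f s :=
    hf_prob ▸ integral_sub_setIntegral_Iic hf hf_supp t
  simp only [weightedVirtualValue, postedPriceRevenue, htail]
  exact intervalIntegral_mul_sub_intervalIntegral hf.intervalIntegrable

theorem postedPriceRevenue_nonpos (hf : Integrable f) (hf_nonneg : ∀ t, 0 ≤ f t)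
    (hf_prob : ∫ t, f t = 1) {r : ℝ} (hr : r ≤ 0) : postedPriceRevenue f r ≤ 0 :=
  mul_nonpos_of_nonpos_of_nonneg hr <| sub_nonneg.2 <|
    hf_prob ▸ setIntegral_le_integral hf (.of_forall hf_nonneg)

theorem postedPriceRevenue_le (hf : Integrable f) (hf_nonneg : ∀ t, 0 ≤ f t)
    (hf_supp : Function.support f ⊆ Iic h) (hf_prob : ∫ t, f t = 1) {r : ℝ} (hr : 0 ≤ r) :
    postedPriceRevenue f r ≤ max h 0 := by
  rcases le_total r h with hrh | hhr
  · have hcdf_nonneg : 0 ≤ ∫ t in Iic r, f t := integral_nonneg hf_nonneg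
    calc postedPriceRevenue f r ≤ r := mul_le_of_le_one_right hr (by linarith)
      _ ≤ max h 0 := le_max_of_le_left hrh
  · have hzero : postedPriceRevenue f r = 0 := by
      rw [← intervalIntegral_weightedVirtualValue hf (hf_supp.trans (Iic_subset_Iic.2 hhr))
        hf_prob r, intervalIntegral.integral_same]
    exact hzero.trans_le (le_max_right h 0)

theorem postedPriceRevenue_le_sSup (hf : Integrable f) (hf_nonneg : ∀ t, 0 ≤ f t)
    (hf_supp : Function.support f ⊆ Iic h) (hf_prob : ∫ t, f t = 1) (r : ℝ) :
    postedPriceRevenue f r ≤ sSup {y : ℝ | ∃ r : ℝ, 0 ≤ r ∧ y = postedPriceRevenue f r} := by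
  have hbdd : BddAbove {y : ℝ | ∃ r : ℝ, 0 ≤ r ∧ y = postedPriceRevenue f r} := by
    refine ⟨max h 0, ?_⟩
    rintro y ⟨p, hp, rfl⟩
    exact postedPriceRevenue_le hf hf_nonneg hf_supp hf_prob hp
  rcases le_total 0 r with hr | hr
  · exact le_csSup hbdd ⟨r, hr, rfl⟩
  · exact (postedPriceRevenue_nonpos hf hf_nonneg hf_prob hr).trans <|
      le_csSup hbdd ⟨0, le_rfl, by simp [postedPriceRevenue]⟩

end Revenue

theorem integral_pos_part_virtual_le_monopoly_rev_general {f : ℝ → ℝ} {l h : ℝ}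
    (hf_nonneg : ∀ t, 0 ≤ f t) (hf_supp : Function.support f ⊆ Iic h) (hf_prob : ∫ t, f t = 1)
    (hf_sign : MonotoneOn (fun t => 0 ≤ weightedVirtualValue f t) (Icc l h)) :
    ∫ t in Icc l h, max (weightedVirtualValue f t) 0 ≤
      sSup {y : ℝ | ∃ r : ℝ, 0 ≤ r ∧ y = postedPriceRevenue f r} := by
  have hf : Integrable f := .of_integral_ne_zero (hf_prob ▸ one_ne_zero)
  obtain ⟨r, hrh, hr⟩ :=
    exists_setIntegral_Icc_max_zero_eq_setIntegral_Ioc (μ := volume) hf_sign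
  calc ∫ t in Icc l h, max (weightedVirtualValue f t) 0
      = ∫ t in r..h, weightedVirtualValue f t := by rw [hr, intervalIntegral.integral_of_le hrh]
    _ = postedPriceRevenue f r := intervalIntegral_weightedVirtualValue hf hf_supp hf_prob r
    _ ≤ _ := postedPriceRevenue_le_sSup hf hf_nonneg hf_supp hf_prob r

/-- For a regular probability density `f` supported on `[l,h]` with `0 < l ≤ h < ∞`,
with CDF `F t = ∫_{t'≤t} f t'` and virtual value `φ t = t − (1 − F t)/f t`,
the integral of the positive part of `f·φ` is at most the monopoly revenue:
`∫_l^h [t·f t − (1 − F t)]₊ dt ≤ sup_{r ≥ 0} r·(1 − F r)`. -/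
theorem integral_pos_part_virtual_le_monopoly_rev
    (f : ℝ → ℝ) (l h : ℝ) (hl : 0 < l) (hlh : l ≤ h)
    (hf_nonneg : ∀ t, 0 ≤ f t)
    (hf_supp : Function.support f = Icc l h)
    (hf_cont : ContinuousOn f (Icc l h))
    (hf_pos : ∀ t ∈ Icc l h, 0 < f t)
    (hf_prob : ∫ t, f t = 1)
    (hf_reg : MonotoneOn (fun t => t - (1 - ∫ t' in Iic t, f t') / f t) (Icc l h)) :
    ∫ t in Icc l h, max (t * f t - (1 - ∫ t' in Iic t, f t')) 0 ≤
      sSup {y : ℝ | ∃ r : ℝ, 0 ≤ r ∧ y = r * (1 - ∫ t' in Iic r, f t')} :=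
  integral_pos_part_virtual_le_monopoly_rev_general hf_nonneg
    (hf_supp.subset.trans Icc_subset_Iic_self) hf_prob
    (monotoneOn_weightedVirtualValue_nonneg hf_pos hf_reg)
end

section
/- Let f be a regular probability density on an interval [l,h] with 0 < l ≤ h < ∞, and define ψ(t) := 2∫_{t'≥t} f(t')/t' dt' − (1/t)·∫_{t'≥t} f(t') dt' for t > 0. Then ∫_l^h [t·ψ(t)]_+ dt ≤ sup_{r≥0} r·(1 − F(r)), i.e. the integral of the positive part of t·ψ(t) is at most the monopoly revenue. -/
open MeasureTheory Set

/-!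
Write `S = 1 - F` for the survival function and `R r = r * S r` for the revenue curve. Exchanging
the order of integration gives `ψ t = S t / t - 2 * J t` with `J t = ∫ x in Ici t, S x / x ^ 2`,
hence `ψ t = 2 * ∫ x in Ici t, (R t - R x) / x ^ 3`: up to a positive factor, `ψ t` is the excess
of the revenue at `t` over a weighted average of the revenues at higher prices.

Since `R' = -f * φ`, regularity makes `R` quasiconcave. For `t ≤ s` this leaves two cases: either
`R t ≤ R x` for all `x` in `[t, s]`, and then `ψ t ≤ ψ s`, or `R x ≤ R s` for all `x ≥ s`, and then
`0 ≤ ψ s`. So `ψ` changes sign at most once, from negative to positive, at some price `a`. As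
`t * ψ t` is the derivative of `-t ^ 2 * J t`, its integral over `[a, h]` is at most `a ^ 2 * J a`,
and `0 ≤ ψ a` says precisely that `a ^ 2 * J a ≤ R a / 2`.
-/

section Calculus

variable {D : Set ℝ} {R w φ p : ℝ → ℝ} {a b l h t x y z : ℝ}

theorem quasiconcaveOn_of_hasDerivAt_neg_mul (hD : Convex ℝ D) (hR : ContinuousOn R D)
    (hR' : ∀ x ∈ interior D, HasDerivAt R (-(w x * φ x)) x) (hw : ∀ x ∈ interior D, 0 ≤ w x)
    (hφ : MonotoneOn φ D) : QuasiconcaveOn ℝ D R := by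
  refine fun r => convex_iff_ordConnected.2 (ordConnected_iff.2 ?_)
  rintro x ⟨hx, hrx⟩ y ⟨hy, hry⟩ - z ⟨hxz, hzy⟩
  have hz : z ∈ D := hD.ordConnected.out hx hy ⟨hxz, hzy⟩
  refine ⟨hz, ?_⟩
  rcases le_total (φ z) 0 with hφz | hφz
  · have hsub : Icc x z ⊆ D := hD.ordConnected.out hx hz
    have hmono : MonotoneOn R (Icc x z) :=
      monotoneOn_of_hasDerivWithinAt_nonneg (convex_Icc x z) (hR.mono hsub)
        (fun u hu => (hR' u (interior_mono hsub hu)).hasDerivWithinAt) fun u hu =>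
        neg_nonneg.2 <| mul_nonpos_of_nonneg_of_nonpos (hw u (interior_mono hsub hu)) <|
          (hφ (hsub (interior_subset hu)) hz (interior_subset hu).2).trans hφz
    exact hrx.trans (hmono (left_mem_Icc.2 hxz) (right_mem_Icc.2 hxz) hxz)
  · have hsub : Icc z y ⊆ D := hD.ordConnected.out hz hy
    have hanti : AntitoneOn R (Icc z y) :=
      antitoneOn_of_hasDerivWithinAt_nonpos (convex_Icc z y) (hR.mono hsub)
        (fun u hu => (hR' u (interior_mono hsub hu)).hasDerivWithinAt) fun u hu =>
        neg_nonpos.2 <| mul_nonneg (hw u (interior_mono hsub hu)) <|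
          hφz.trans (hφ hz (hsub (interior_subset hu)) (interior_subset hu).1)
    exact hry.trans (hanti (left_mem_Icc.2 hzy) (right_mem_Icc.2 hzy) hzy)

theorem min_le_of_quasiconcaveOn (hR : QuasiconcaveOn ℝ D R) (hx : x ∈ D) (hz : z ∈ D)
    (hy : y ∈ Icc x z) : min (R x) (R z) ≤ R y :=
  ((hR _).ordConnected.out ⟨hx, min_le_left _ _⟩ ⟨hz, min_le_right _ _⟩ hy).2

theorem quasiconcaveOn_Ici_of_Icc (hR : QuasiconcaveOn ℝ (Icc l h) R)
    (hR_nonneg : ∀ x ∈ Icc l h, 0 ≤ R x) (hR_zero : ∀ x, h < x → R x = 0) :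
    QuasiconcaveOn ℝ (Ici l) R := by
  intro r
  rcases le_or_gt r 0 with hr | hr
  · have hall : {x ∈ Ici l | r ≤ R x} = Ici l := by
      refine sep_eq_self_iff_mem_true.2 fun x hx => hr.trans ?_
      rcases le_or_gt x h with hxh | hxh
      · exact hR_nonneg x ⟨hx, hxh⟩
      · exact (hR_zero x hxh).ge
    rw [hall]
    exact convex_Ici l
  · have hsame : {x ∈ Ici l | r ≤ R x} = {x ∈ Icc l h | r ≤ R x} := by
      ext x
      refine ⟨fun ⟨hx, hrx⟩ => ⟨⟨hx, not_lt.1 fun hxh => ?_⟩, hrx⟩,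
        fun ⟨hx, hrx⟩ => ⟨hx.1, hrx⟩⟩
      exact (hr.trans_le hrx).ne' (hR_zero x hxh)
    rw [hsame]
    exact hR r

theorem exists_sign_change {α : Type*} [ConditionallyCompleteLinearOrder α] [TopologicalSpace α]
    [OrderTopology α] {p : α → ℝ} {l h : α} (hlh : l ≤ h) (hp : ContinuousOn p (Icc l h))
    (hcross : ∀ t ∈ Icc l h, ∀ s ∈ Icc l h, t ≤ s → 0 < p t → 0 ≤ p s) :
    ∃ a ∈ Icc l h, (a = h ∨ 0 ≤ p a) ∧ (∀ t ∈ Ico l a, p t ≤ 0) ∧ ∀ t ∈ Ioc a h, 0 ≤ p t := by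
  rcases {t ∈ Icc l h | 0 < p t}.eq_empty_or_nonempty with hempty | hne
  · exact ⟨h, right_mem_Icc.2 hlh, .inl rfl,
      fun t ht => not_lt.1 fun hpos => hempty.subset ⟨Ico_subset_Icc_self ht, hpos⟩,
      fun t ht => absurd ht.1 ht.2.not_gt⟩
  set A := {t ∈ Icc l h | 0 < p t}
  have hbdd : BddBelow A := ⟨l, fun t ht => ht.1.1⟩
  have hclosed : IsClosed (Icc l h ∩ p ⁻¹' Ici 0) :=
    hp.preimage_isClosed_of_isClosed isClosed_Icc isClosed_Ici
  have hsub : A ⊆ Icc l h ∩ p ⁻¹' Ici 0 := fun t ht => ⟨ht.1, ht.2.le⟩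
  obtain ⟨ha, hpa⟩ : sInf A ∈ Icc l h ∩ p ⁻¹' Ici 0 :=
    closure_minimal hsub hclosed (csInf_mem_closure hne hbdd)
  refine ⟨sInf A, ha, .inr hpa, fun t ht => ?_, fun t ht => ?_⟩
  · exact not_lt.1 fun hpos => (csInf_le hbdd ⟨⟨ht.1, ht.2.le.trans ha.2⟩, hpos⟩).not_gt ht.2
  · obtain ⟨u, hu, hut⟩ := exists_lt_of_csInf_lt hne ht.1
    exact hcross u hu.1 t ⟨ha.1.trans ht.1.le, ht.2⟩ hut.le hu.2

theorem integral_pos_part_eq_of_sign_change (hp : ContinuousOn p (Icc l h)) (ha : a ∈ Icc l h)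
    (hleft : ∀ t ∈ Ico l a, p t ≤ 0) (hright : ∀ t ∈ Ioc a h, 0 ≤ p t) :
    ∫ t in l..h, max (p t) 0 = ∫ t in a..h, p t := by
  have hmax : ContinuousOn (fun t => max (p t) 0) (Icc l h) := hp.sup continuousOn_const
  rw [← intervalIntegral.integral_add_adjacent_intervals
    ((hmax.mono (Icc_subset_Icc_right ha.2)).intervalIntegrable_of_Icc ha.1)
    ((hmax.mono (Icc_subset_Icc_left ha.1)).intervalIntegrable_of_Icc ha.2)]
  have hzero : ∫ t in l..a, max (p t) 0 = 0 := by
    rw [intervalIntegral.integral_of_le ha.1, ← integral_Icc_eq_integral_Ioc,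
      integral_Icc_eq_integral_Ico]
    exact setIntegral_eq_zero_of_forall_eq_zero fun t ht => max_eq_right (hleft t ht)
  rw [hzero, zero_add, intervalIntegral.integral_of_le ha.2, intervalIntegral.integral_of_le ha.2]
  exact setIntegral_congr_fun measurableSet_Ioc fun t ht => max_eq_left (hright t ht)

theorem hasDerivAt_integral_Ici {E : Type*} [NormedAddCommGroup E] [NormedSpace ℝ E]
    [CompleteSpace E] {g : ℝ → E} (hg : IntegrableOn g (Ici a)) (hat : a < t)
    (hgt : ContinuousAt g t) :
    HasDerivAt (fun x => ∫ s in Ici x, g s) (-g t) t := by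
  have hint : IntervalIntegrable g volume a t :=
    (intervalIntegrable_iff_integrableOn_Icc_of_le hat.le).2 (hg.mono_set Icc_subset_Ici_self)
  have hmeas : StronglyMeasurableAtFilter g (nhds t) :=
    ⟨Ici a, Ici_mem_nhds hat, hg.aestronglyMeasurable⟩
  refine ((intervalIntegral.integral_hasDerivAt_right hint hmeas hgt).const_sub
    (∫ s in Ici a, g s)).congr_of_eventuallyEq ?_
  filter_upwards [Ioi_mem_nhds hat] with x hx
  rw [← intervalIntegral.integral_Ici_sub_Ici' hg (hg.mono_set (Ici_subset_Ici.2 hx.le)),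
    sub_sub_cancel]

theorem integrableOn_Ici_inv_pow (n : ℕ) (ht : 0 < t) :
    IntegrableOn (fun x : ℝ => (x ^ (n + 2))⁻¹) (Ici t) := by
  have hexp : -((n + 2 : ℕ) : ℝ) < -1 := neg_lt_neg (Nat.one_lt_cast.2 (by lia))
  rw [integrableOn_Ici_iff_integrableOn_Ioi]
  refine (integrableOn_Ioi_rpow_of_lt hexp ht).congr_fun (fun x hx => ?_) measurableSet_Ioi
  simp only [Real.rpow_neg (ht.trans hx).le, Real.rpow_natCast]

theorem integral_Ici_inv_pow (n : ℕ) (ht : 0 < t) :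
    ∫ x in Ici t, (x ^ (n + 2))⁻¹ = ((n + 1) * t ^ (n + 1))⁻¹ := by
  have hexp : -((n + 2 : ℕ) : ℝ) < -1 := neg_lt_neg (Nat.one_lt_cast.2 (by lia))
  have hpow : -((n + 2 : ℕ) : ℝ) + 1 = -((n + 1 : ℕ) : ℝ) := by
    push_cast
    ring
  calc ∫ x in Ici t, (x ^ (n + 2))⁻¹
      = ∫ x in Ioi t, x ^ (-((n + 2 : ℕ) : ℝ)) := by
        rw [integral_Ici_eq_integral_Ioi]
        refine setIntegral_congr_fun measurableSet_Ioi fun x hx => ?_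
        simp only [Real.rpow_neg (ht.trans hx).le, Real.rpow_natCast]
    _ = ((n + 1) * t ^ (n + 1))⁻¹ := by
        rw [integral_Ioi_rpow_of_lt hexp ht, hpow, Real.rpow_neg ht.le, Real.rpow_natCast,
          neg_div_neg_eq, mul_inv_rev]
        push_cast
        rw [div_eq_mul_inv]

theorem integral_Icc_inv_sq (ha : 0 < a) (hab : a ≤ b) :
    ∫ x in Icc a b, (x ^ 2)⁻¹ = a⁻¹ - b⁻¹ := by
  rw [integral_Icc_eq_integral_Ico,
    ← intervalIntegral.integral_Ici_sub_Ici (integrableOn_Ici_inv_pow 0 ha) hab,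
    integral_Ici_inv_pow 0 ha, integral_Ici_inv_pow 0 (ha.trans_le hab)]
  norm_num

end Calculus

/-- The survival function `1 - F` of the distribution with density `f`, encoded as a tail integral
so that it makes sense whatever the total mass of `f`. -/
noncomputable def survival (f : ℝ → ℝ) (t : ℝ) : ℝ := ∫ s in Ici t, f s

/-- The revenue curve: the expected revenue from posting the price `r` to a buyer whose value has
density `f`. -/
noncomputable def revenue (f : ℝ → ℝ) (r : ℝ) : ℝ := r * survival f r

/-- The function `ψ` attached to the density `f`, meaningful at `t > 0`. -/
noncomputable def psi (f : ℝ → ℝ) (t : ℝ) : ℝ :=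
  2 * (∫ s in Ici t, f s / s) - 1 / t * survival f t

section Survival

variable {f : ℝ → ℝ} {a b l h r t s : ℝ}

theorem survival_nonneg (hf_nonneg : ∀ t, 0 ≤ f t) (t : ℝ) : 0 ≤ survival f t :=
  integral_nonneg hf_nonneg

theorem revenue_nonneg (hf_nonneg : ∀ t, 0 ≤ f t) (hr : 0 ≤ r) : 0 ≤ revenue f r :=
  mul_nonneg hr (survival_nonneg hf_nonneg r)

theorem survival_eq_zero_of_support_subset (hf_supp : Function.support f ⊆ Iic h) (ht : h < t) :
    survival f t = 0 :=
  setIntegral_eq_zero_of_forall_eq_zero fun _ hs => Function.notMem_support.1 fun hfs =>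
    (ht.trans_le hs).not_ge (hf_supp hfs)

theorem survival_eq_integral_sub (hf : Integrable f) (t : ℝ) :
    survival f t = (∫ s, f s) - ∫ s in Iic t, f s := by
  rw [survival, integral_Ici_eq_integral_Ioi, ← intervalIntegral.integral_Iic_add_Ioi
    hf.integrableOn hf.integrableOn, add_sub_cancel_left]

theorem one_sub_integral_Iic_eq_survival (hf_prob : ∫ t, f t = 1) (t : ℝ) :
    1 - ∫ s in Iic t, f s = survival f t := by
  rw [survival_eq_integral_sub (.of_integral_ne_zero (hf_prob ▸ one_ne_zero)), hf_prob]

theorem continuous_survival (hf : Integrable f) : Continuous (survival f) := by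
  refine continuous_iff_continuousAt.2 fun t => ?_
  exact (hf.integrableOn.continuousOn_Ici_primitive_Ici (a₀ := t - 1)).continuousAt
    (Ici_mem_nhds (sub_one_lt t))

theorem hasDerivAt_revenue (hf : Integrable f) (ht : ContinuousAt f t) :
    HasDerivAt (revenue f) (survival f t - t * f t) t := by
  refine ((hasDerivAt_id t).mul (hasDerivAt_integral_Ici (a := t - 1) hf.integrableOn
    (sub_one_lt t) ht)).congr_deriv ?_
  rw [one_mul, id, mul_neg, ← sub_eq_add_neg, survival]

theorem revenue_le_of_support_subset (hf_nonneg : ∀ t, 0 ≤ f t) (hf : Integrable f) (hh : 0 ≤ h)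
    (hf_supp : Function.support f ⊆ Iic h) (r : ℝ) : revenue f r ≤ h * ∫ s, f s := by
  rcases le_or_gt r h with hrh | hrh
  · have hle : survival f r ≤ ∫ s, f s :=
      setIntegral_le_integral hf (ae_of_all _ hf_nonneg)
    exact mul_le_mul hrh hle (survival_nonneg hf_nonneg r) hh
  · rw [revenue, survival_eq_zero_of_support_subset hf_supp hrh, mul_zero]
    exact mul_nonneg hh (integral_nonneg hf_nonneg)

theorem integrable_inv_sq_mul_indicator_Ici (hf : Integrable f) (ht : 0 < t) :
    Integrable (fun p : ℝ × ℝ => (p.1 ^ 2)⁻¹ * (Ici p.1).indicator f p.2)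
      ((volume.restrict (Ici t)).prod volume) := by
  have hset : MeasurableSet {p : ℝ × ℝ | p.1 ≤ p.2} :=
    measurableSet_le measurable_fst measurable_snd
  refine (((integrableOn_Ici_inv_pow 0 ht).mul_prod hf).indicator hset).congr (ae_of_all _ ?_)
  rintro ⟨x, s⟩
  by_cases hxs : x ≤ s <;> simp [hxs]

theorem integral_inv_sq_mul_indicator_Ici (f : ℝ → ℝ) (x : ℝ) :
    ∫ s, (x ^ 2)⁻¹ * (Ici x).indicator f s = survival f x / x ^ 2 := by
  rw [integral_const_mul, integral_indicator measurableSet_Ici, ← survival, inv_mul_eq_div]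

theorem integrableOn_survival_div_sq (hf : Integrable f) (ht : 0 < t) :
    IntegrableOn (fun x => survival f x / x ^ 2) (Ici t) := by
  simpa only [integral_inv_sq_mul_indicator_Ici] using!
    (integrable_inv_sq_mul_indicator_Ici hf ht).integral_prod_left

theorem integral_Ici_inv_sq_mul_indicator_Ici (f : ℝ → ℝ) (ht : 0 < t) (s : ℝ) :
    ∫ x in Ici t, (x ^ 2)⁻¹ * (Ici x).indicator f s =
      (Ici t).indicator (fun s => f s / t - f s / s) s := by
  have hflip : ∀ x, (x ^ 2)⁻¹ * (Ici x).indicator f s =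
      (Iic s).indicator (fun x => (x ^ 2)⁻¹ * f s) x := fun x => by
    by_cases hxs : x ≤ s <;> simp [hxs]
  simp only [hflip, setIntegral_indicator measurableSet_Iic, Ici_inter_Iic]
  rcases le_or_gt t s with hts | hts
  · rw [integral_mul_const, integral_Icc_inv_sq ht hts, indicator_of_mem (mem_Ici.2 hts)]
    ring
  · rw [Icc_eq_empty hts.not_ge, setIntegral_empty, indicator_of_notMem (notMem_Ici.2 hts)]

theorem integrableOn_div_id (hf : Integrable f) (ht : 0 < t) :
    IntegrableOn (fun s => f s / s) (Ici t) := by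
  refine (hf.norm.div_const t).integrableOn.mono'
    (hf.aestronglyMeasurable.div₀ measurable_id.aestronglyMeasurable).restrict ?_
  filter_upwards [ae_restrict_mem measurableSet_Ici] with s hs
  rw [norm_div, Real.norm_of_nonneg (ht.le.trans hs)]
  exact div_le_div_of_nonneg_left (norm_nonneg _) ht hs

theorem integral_survival_div_sq (hf : Integrable f) (ht : 0 < t) :
    ∫ x in Ici t, survival f x / x ^ 2 = survival f t / t - ∫ s in Ici t, f s / s :=
  calc ∫ x in Ici t, survival f x / x ^ 2
      = ∫ x in Ici t, ∫ s, (x ^ 2)⁻¹ * (Ici x).indicator f s := by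
        simp only [integral_inv_sq_mul_indicator_Ici]
    _ = ∫ s in Ici t, (f s / t - f s / s) := by
        rw [integral_integral_swap (integrable_inv_sq_mul_indicator_Ici hf ht)]
        simp only [integral_Ici_inv_sq_mul_indicator_Ici f ht,
          integral_indicator measurableSet_Ici]
    _ = survival f t / t - ∫ s in Ici t, f s / s := by
        rw [integral_sub (hf.div_const t).integrableOn (integrableOn_div_id hf ht),
          integral_div, survival]

theorem psi_eq_sub (hf : Integrable f) (ht : 0 < t) :
    psi f t = survival f t / t - 2 * ∫ x in Ici t, survival f x / x ^ 2 := by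
  rw [psi, integral_survival_div_sq hf ht]
  ring

theorem hasDerivAt_integral_survival_div_sq (hf : Integrable f) (ht : 0 < t) :
    HasDerivAt (fun t => ∫ x in Ici t, survival f x / x ^ 2) (-(survival f t / t ^ 2)) t :=
  hasDerivAt_integral_Ici (integrableOn_survival_div_sq hf (half_pos ht)) (half_lt_self ht)
    ((continuous_survival hf).continuousAt.div₀ (continuousAt_id.pow 2) (pow_ne_zero 2 ht.ne'))

theorem continuousOn_psi (hf : Integrable f) : ContinuousOn (psi f) (Ioi 0) := by
  refine ContinuousOn.congr (fun t ht => ContinuousAt.continuousWithinAt ?_)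
    fun t ht => psi_eq_sub hf ht
  exact ((continuous_survival hf).continuousAt.div₀ continuousAt_id (ne_of_gt ht)).sub
    ((hasDerivAt_integral_survival_div_sq hf ht).continuousAt.const_mul 2)

theorem integral_mul_psi (hf : Integrable f) (ha : 0 < a) (hab : a ≤ b) :
    ∫ t in a..b, t * psi f t = (a ^ 2 * ∫ x in Ici a, survival f x / x ^ 2) -
      b ^ 2 * ∫ x in Ici b, survival f x / x ^ 2 := by
  have hpos : uIcc a b ⊆ Ioi 0 := fun t ht => ha.trans_le (uIcc_of_le hab ▸ ht).1
  have hderiv : ∀ t ∈ uIcc a b, HasDerivAt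
      (fun t => -(t ^ 2 * ∫ x in Ici t, survival f x / x ^ 2)) (t * psi f t) t := fun t ht => by
    have ht0 : 0 < t := hpos ht
    refine ((hasDerivAt_pow 2 t).mul
      (hasDerivAt_integral_survival_div_sq hf ht0)).neg.congr_deriv ?_
    rw [psi_eq_sub hf ht0]
    field_simp
    push_cast
    ring
  rw [intervalIntegral.integral_eq_sub_of_hasDerivAt hderiv
    (continuousOn_id.mul ((continuousOn_psi hf).mono hpos)).intervalIntegrable]
  ring

theorem integral_mul_psi_le_half_revenue (hf_nonneg : ∀ t, 0 ≤ f t) (hf : Integrable f)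
    (ha : 0 < a) (hab : a ≤ b) (hψa : 0 ≤ psi f a) :
    ∫ t in a..b, t * psi f t ≤ revenue f a / 2 := by
  have htail : ∀ t, 0 ≤ ∫ x in Ici t, survival f x / x ^ 2 := fun t =>
    integral_nonneg fun x => div_nonneg (survival_nonneg hf_nonneg x) (sq_nonneg x)
  have hrev : revenue f a - 2 * (a ^ 2 * ∫ x in Ici a, survival f x / x ^ 2) =
      a ^ 2 * psi f a := by
    rw [psi_eq_sub hf ha, revenue]
    field_simp
  rw [integral_mul_psi hf ha hab]
  linarith [mul_nonneg (sq_nonneg a) hψa, mul_nonneg (sq_nonneg b) (htail b)]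

theorem revenue_div_cube (f : ℝ → ℝ) (t : ℝ) : revenue f t / t ^ 3 = survival f t / t ^ 2 := by
  rw [revenue]
  field_simp

theorem integrableOn_sub_revenue_div_cube (hf : Integrable f) (ht : 0 < t) (c : ℝ) :
    IntegrableOn (fun x => (c - revenue f x) / x ^ 3) (Ici t) := by
  simp only [sub_div, revenue_div_cube, div_eq_mul_inv c]
  exact ((integrableOn_Ici_inv_pow 1 ht).const_mul c).sub (integrableOn_survival_div_sq hf ht)

theorem psi_eq_integral (hf : Integrable f) (ht : 0 < t) :
    psi f t = 2 * ∫ x in Ici t, (revenue f t - revenue f x) / x ^ 3 := by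
  simp only [sub_div, revenue_div_cube, div_eq_mul_inv (revenue f t)]
  rw [integral_sub ((integrableOn_Ici_inv_pow 1 ht).const_mul _)
    (integrableOn_survival_div_sq hf ht), integral_const_mul, integral_Ici_inv_pow 1 ht,
    psi_eq_sub hf ht, revenue]
  field_simp
  ring

theorem psi_le_psi_of_forall_le_revenue (hf : Integrable f) (ht : 0 < t) (hts : t ≤ s)
    (hR : ∀ x ∈ Icc t s, revenue f t ≤ revenue f x) : psi f t ≤ psi f s := by
  have hs : 0 < s := ht.trans_le hts
  have hIco : ∫ x in Ico t s, (revenue f t - revenue f x) / x ^ 3 ≤ 0 :=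
    setIntegral_nonpos measurableSet_Ico fun x hx => div_nonpos_of_nonpos_of_nonneg
      (sub_nonpos.2 (hR x (Ico_subset_Icc_self hx))) (pow_nonneg (ht.le.trans hx.1) 3)
  have hsplit := intervalIntegral.integral_Ici_sub_Ici
    (integrableOn_sub_revenue_div_cube hf ht (revenue f t)) hts
  calc psi f t
      = 2 * ∫ x in Ici t, (revenue f t - revenue f x) / x ^ 3 := psi_eq_integral hf ht
    _ ≤ 2 * ∫ x in Ici s, (revenue f t - revenue f x) / x ^ 3 := by linarith
    _ ≤ 2 * ∫ x in Ici s, (revenue f s - revenue f x) / x ^ 3 := by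
      refine mul_le_mul_of_nonneg_left (setIntegral_mono_on
        (integrableOn_sub_revenue_div_cube hf hs _)
        (integrableOn_sub_revenue_div_cube hf hs _) measurableSet_Ici fun x hx => ?_) zero_le_two
      have hx0 : 0 < x := hs.trans_le hx
      have hRs : revenue f t ≤ revenue f s := hR s (right_mem_Icc.2 hts)
      gcongr
    _ = psi f s := (psi_eq_integral hf hs).symm

theorem psi_nonneg_of_forall_revenue_le (hf : Integrable f) (hs : 0 < s)
    (hR : ∀ x ∈ Ici s, revenue f x ≤ revenue f s) : 0 ≤ psi f s := by
  rw [psi_eq_integral hf hs]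
  exact mul_nonneg zero_le_two <| setIntegral_nonneg measurableSet_Ici fun x hx =>
    div_nonneg (sub_nonneg.2 (hR x hx)) (pow_nonneg (hs.le.trans hx) 3)

theorem psi_nonneg_of_psi_pos (hl : 0 < l) (hf : Integrable f)
    (hR : QuasiconcaveOn ℝ (Ici l) (revenue f)) (ht : l ≤ t) (hts : t ≤ s) (hψt : 0 < psi f t) :
    0 ≤ psi f s := by
  have ht0 : 0 < t := hl.trans_le ht
  have hs : l ≤ s := ht.trans hts
  rcases le_or_gt (revenue f t) (revenue f s) with hRts | hRst
  · refine hψt.le.trans (psi_le_psi_of_forall_le_revenue hf ht0 hts fun x hx => ?_)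
    exact min_eq_left hRts ▸ min_le_of_quasiconcaveOn hR ht hs hx
  · refine psi_nonneg_of_forall_revenue_le hf (ht0.trans_le hts) fun x hx => ?_
    exact (min_le_iff.1 (min_le_of_quasiconcaveOn hR ht (hs.trans hx) ⟨hts, hx⟩)).resolve_left
      hRst.not_ge

theorem exists_integral_pos_part_le_half_revenue (hl : 0 < l) (hlh : l ≤ h)
    (hf_nonneg : ∀ t, 0 ≤ f t) (hf : Integrable f)
    (hR : QuasiconcaveOn ℝ (Ici l) (revenue f)) :
    ∃ a ∈ Icc l h, ∫ t in l..h, max (t * psi f t) 0 ≤ revenue f a / 2 := by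
  have hcont : ContinuousOn (fun t => t * psi f t) (Icc l h) :=
    continuousOn_id.mul ((continuousOn_psi hf).mono fun t ht => hl.trans_le ht.1)
  have hcross : ∀ t ∈ Icc l h, ∀ s ∈ Icc l h, t ≤ s → 0 < t * psi f t → 0 ≤ s * psi f s :=
    fun t ht s hs hts hpos => mul_nonneg (hl.le.trans hs.1) <|
      psi_nonneg_of_psi_pos hl hf hR ht.1 hts (pos_of_mul_pos_right hpos (hl.le.trans ht.1))
  obtain ⟨a, ha, hend, hleft, hright⟩ := exists_sign_change hlh hcont hcross
  have ha0 : 0 < a := hl.trans_le ha.1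
  refine ⟨a, ha, ?_⟩
  rw [integral_pos_part_eq_of_sign_change hcont ha hleft hright]
  rcases hend with rfl | hψa
  · rw [intervalIntegral.integral_same]
    exact div_nonneg (revenue_nonneg hf_nonneg ha0.le) zero_le_two
  · exact integral_mul_psi_le_half_revenue hf_nonneg hf ha0 ha.2
      (nonneg_of_mul_nonneg_right hψa ha0)

theorem quasiconcaveOn_revenue_of_regular (hf : Integrable f)
    (hf_cont : ContinuousOn f (Icc l h)) (hf_pos : ∀ t ∈ Icc l h, 0 < f t)
    (hf_reg : MonotoneOn (fun t => t - survival f t / f t) (Icc l h)) :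
    QuasiconcaveOn ℝ (Icc l h) (revenue f) := by
  refine quasiconcaveOn_of_hasDerivAt_neg_mul (convex_Icc l h)
    (continuous_id.mul (continuous_survival hf)).continuousOn (fun t ht => ?_)
    (fun t ht => (hf_pos t (interior_subset ht)).le) hf_reg
  refine (hasDerivAt_revenue hf (hf_cont.continuousAt (mem_interior_iff_mem_nhds.1 ht))).congr_deriv
    ?_
  have := (hf_pos t (interior_subset ht)).ne'
  field_simp
  ring

theorem quasiconcaveOn_mul_one_sub_cdf_of_regular (hl : 0 ≤ l) (hf_nonneg : ∀ t, 0 ≤ f t)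
    (hf_supp : Function.support f ⊆ Iic h) (hf_cont : ContinuousOn f (Icc l h))
    (hf_pos : ∀ t ∈ Icc l h, 0 < f t) (hf_prob : ∫ t, f t = 1)
    (hf_reg : MonotoneOn (fun t => t - (1 - ∫ t' in Iic t, f t') / f t) (Icc l h)) :
    QuasiconcaveOn ℝ (Ici l) fun r => r * (1 - ∫ t in Iic r, f t) := by
  simp only [one_sub_integral_Iic_eq_survival hf_prob] at hf_reg ⊢
  refine quasiconcaveOn_Ici_of_Icc (quasiconcaveOn_revenue_of_regular
    (.of_integral_ne_zero (hf_prob ▸ one_ne_zero)) hf_cont hf_pos hf_reg)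
    (fun r hr => revenue_nonneg hf_nonneg (hl.trans hr.1)) fun r hr => ?_
  rw [survival_eq_zero_of_support_subset hf_supp hr, mul_zero]

theorem bddAbove_mul_one_sub_cdf (hh : 0 ≤ h) (hf_nonneg : ∀ t, 0 ≤ f t)
    (hf_supp : Function.support f ⊆ Iic h) (hf_prob : ∫ t, f t = 1) :
    BddAbove {y : ℝ | ∃ r : ℝ, 0 ≤ r ∧ y = r * (1 - ∫ t in Iic r, f t)} := by
  refine ⟨h * ∫ t, f t, ?_⟩
  rintro y ⟨r, -, rfl⟩
  rw [one_sub_integral_Iic_eq_survival hf_prob]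
  exact revenue_le_of_support_subset hf_nonneg (.of_integral_ne_zero (hf_prob ▸ one_ne_zero)) hh
    hf_supp r

end Survival

theorem integral_pos_part_t_psi_le_monopoly_rev_general
    {f : ℝ → ℝ} {l h : ℝ} (hl : 0 < l) (hlh : l ≤ h)
    (hf_nonneg : ∀ t, 0 ≤ f t)
    (hf_prob : ∫ t, f t = 1)
    (hR : QuasiconcaveOn ℝ (Ici l) fun r => r * (1 - ∫ t in Iic r, f t))
    (hR_bdd : BddAbove {y : ℝ | ∃ r : ℝ, 0 ≤ r ∧ y = r * (1 - ∫ t in Iic r, f t)})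
    {ψ : ℝ → ℝ}
    (hψ : ∀ t : ℝ, 0 < t →
      ψ t = 2 * (∫ t' in Ici t, f t' / t') - (1 / t) * ∫ t' in Ici t, f t') :
    ∫ t in Icc l h, max (t * ψ t) 0 ≤
      sSup {y : ℝ | ∃ r : ℝ, 0 ≤ r ∧ y = r * (1 - ∫ t in Iic r, f t)} / 2 := by
  have hf : Integrable f := .of_integral_ne_zero (hf_prob ▸ one_ne_zero)
  simp only [one_sub_integral_Iic_eq_survival hf_prob] at hR hR_bdd ⊢
  obtain ⟨a, ha, hle⟩ := exists_integral_pos_part_le_half_revenue hl hlh hf_nonneg hf hR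
  calc ∫ t in Icc l h, max (t * ψ t) 0
      = ∫ t in l..h, max (t * psi f t) 0 := by
        rw [intervalIntegral.integral_of_le hlh, ← integral_Icc_eq_integral_Ioc]
        refine setIntegral_congr_fun measurableSet_Icc fun t ht => ?_
        simp only [hψ t (hl.trans_le ht.1), psi, survival]
    _ ≤ revenue f a / 2 := hle
    _ ≤ sSup {y : ℝ | ∃ r : ℝ, 0 ≤ r ∧ y = r * survival f r} / 2 := by
        gcongr
        exact le_csSup hR_bdd ⟨a, hl.le.trans ha.1, rfl⟩

/-- For a regular probability density `f` supported on `[l,h]` with `0 < l ≤ h < ∞`,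
defining `ψ t = 2∫_{t'≥t} f t'/t' dt' − (1/t)·∫_{t'≥t} f t' dt'`, the integral of the
positive part of `t·ψ t` is at most the monopoly revenue `sup_{r ≥ 0} r·(1 − F r)`. -/
theorem integral_pos_part_t_psi_le_monopoly_rev
    (f : ℝ → ℝ) (l h : ℝ) (hl : 0 < l) (hlh : l ≤ h)
    (hf_nonneg : ∀ t, 0 ≤ f t)
    (hf_supp : Function.support f = Icc l h)
    (hf_cont : ContinuousOn f (Icc l h))
    (hf_pos : ∀ t ∈ Icc l h, 0 < f t)
    (hf_prob : ∫ t, f t = 1)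
    (hf_reg : MonotoneOn (fun t => t - (1 - ∫ t' in Iic t, f t') / f t) (Icc l h))
    (ψ : ℝ → ℝ)
    (hψ : ∀ t : ℝ, 0 < t →
      ψ t = 2 * (∫ t' in Ici t, f t' / t') - (1 / t) * ∫ t' in Ici t, f t') :
    ∫ t in Icc l h, max (t * ψ t) 0 ≤
      sSup {y : ℝ | ∃ r : ℝ, 0 ≤ r ∧ y = r * (1 - ∫ t' in Iic r, f t')} := by
  have hsupp : Function.support f ⊆ Iic h := hf_supp.subset.trans Icc_subset_Iic_self
  have hle := integral_pos_part_t_psi_le_monopoly_rev_general hl hlh hf_nonneg hf_prob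
    (quasiconcaveOn_mul_one_sub_cdf_of_regular hl.le hf_nonneg hsupp hf_cont hf_pos hf_prob hf_reg)
    (bddAbove_mul_one_sub_cdf (hl.le.trans hlh) hf_nonneg hsupp hf_prob) hψ
  have hnonneg : 0 ≤ ∫ t in Icc l h, max (t * ψ t) 0 := integral_nonneg fun _ => le_max_right _ _
  linarith
end

section
/- Let f be a probability density supported on [l,h] with 0 < l ≤ h < ∞, and define ψ(t) := 2∫_{t'≥t} f(t')/t' dt' − (1/t)·∫_{t'≥t} f(t') dt'. Then for every r > 0, ∫_{0 < t ≤ r} t·ψ(t) dt = ∫_{t' > r} ( r²/t' − r )·f(t') dt', and in particular ∫_{0 < t ≤ r} t·ψ(t) dt ≤ 0. -/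
open MeasureTheory Set

/-!
Since `t * ψ t = ∫_{x ≥ t} (2t/x - 1) f x dx`, exchanging the integrals over `0 < t ≤ min r x`
leaves the weight `∫_{0 < t ≤ min r x} (2t/x - 1) dt = m²/x - m`, where `m = min r x`. It vanishes
for `x ≤ r`, since then `m = x`, and equals `r²/x - r < 0` for `x > r`.
-/

section Fubini

variable {α β E : Type*} [NormedAddCommGroup E] [NormedSpace ℝ E]

lemma integral_setIntegral_swap [MeasurableSpace α] [MeasurableSpace β]
    {μ : Measure α} {ν : Measure β} [SFinite μ] [SFinite ν] {s : Set (α × β)} {K : α → β → E}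
    (hs : MeasurableSet s) (hK : IntegrableOn (Function.uncurry K) s (μ.prod ν)) :
    ∫ a, ∫ b in {b | (a, b) ∈ s}, K a b ∂ν ∂μ = ∫ b, ∫ a in {a | (a, b) ∈ s}, K a b ∂μ ∂ν := by
  have hleft (a : α) : MeasurableSet {b | (a, b) ∈ s} := measurable_prodMk_left hs
  have hright (b : β) : MeasurableSet {a | (a, b) ∈ s} := measurable_prodMk_right hs
  simp_rw [← integral_indicator (hleft _), ← integral_indicator (hright _)]
  exact integral_integral_swap (f := fun a b => s.indicator (Function.uncurry K) (a, b))
    (hK.integrable_indicator hs)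

lemma setIntegral_integral_Ici_swap [PartialOrder α] [TopologicalSpace α] [OrderClosedTopology α]
    [SecondCountableTopology α] [MeasurableSpace α] [OpensMeasurableSpace α]
    {μ ν : Measure α} [SFinite μ] [SFinite ν] {s : Set α} {K : α → α → E}
    (hK : IntegrableOn (Function.uncurry K) {p | p.1 ∈ s ∧ p.1 ≤ p.2} (μ.prod ν)) :
    ∫ t in s, ∫ x in Ici t, K t x ∂ν ∂μ = ∫ x, ∫ t in s ∩ Iic x, K t x ∂μ ∂ν := by
  have hle : MeasurableSet {p : α × α | p.1 ≤ p.2} := measurableSet_le'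
  have hK' : IntegrableOn (Function.uncurry K) {p | p.1 ≤ p.2} ((μ.restrict s).prod ν) := by
    rw [IntegrableOn, Measure.restrict_prod_eq_prod_univ, Measure.restrict_restrict hle]
    exact hK.mono_set fun p hp => ⟨hp.2.1, hp.1⟩
  calc ∫ t in s, ∫ x in Ici t, K t x ∂ν ∂μ
      = ∫ x, ∫ t in Iic x, K t x ∂(μ.restrict s) ∂ν := integral_setIntegral_swap hle hK'
    _ = ∫ x, ∫ t in s ∩ Iic x, K t x ∂μ ∂ν := by
      simp_rw [Measure.restrict_restrict measurableSet_Iic, inter_comm]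

end Fubini

lemma setIntegral_Ioc_two_mul_div_sub_one {a b : ℝ} (hab : a ≤ b) (x : ℝ) :
    ∫ t in Ioc a b, (2 * t / x - 1) = (b ^ 2 - a ^ 2) / x - (b - a) := by
  rw [← intervalIntegral.integral_of_le hab, intervalIntegral.integral_sub
    (Continuous.intervalIntegrable (by fun_prop) _ _) intervalIntegrable_const,
    intervalIntegral.integral_div, intervalIntegral.integral_const_mul, integral_id,
    integral_one]
  ring

lemma setIntegral_Ioc_inter_Iic_two_mul_div_sub_one {r : ℝ} (hr : 0 ≤ r) (x : ℝ) :
    ∫ t in Ioc 0 r ∩ Iic x, (2 * t / x - 1) = (Ioi r).indicator (fun x => r ^ 2 / x - r) x := by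
  rw [Ioc_inter_Iic]
  rcases lt_or_ge r x with hrx | hxr
  · rw [min_eq_left hrx.le, indicator_of_mem (mem_Ioi.2 hrx),
      setIntegral_Ioc_two_mul_div_sub_one hr]
    ring
  rw [min_eq_right hxr, indicator_of_notMem (notMem_Ioi.2 hxr)]
  rcases le_or_gt x 0 with hx | hx
  · simp [Ioc_eq_empty_of_le hx]
  · rw [setIntegral_Ioc_two_mul_div_sub_one hx.le]
    field_simp
    ring

lemma abs_two_mul_div_sub_one_le_one {t x : ℝ} (ht : 0 ≤ t) (htx : t ≤ x) :
    |2 * t / x - 1| ≤ 1 := by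
  have hle : t / x ≤ 1 := div_le_one_of_le₀ htx (ht.trans htx)
  have hnonneg : 0 ≤ t / x := div_nonneg ht (ht.trans htx)
  rw [mul_div_assoc, abs_le]
  constructor <;> linarith

section Tail

variable {μ : Measure ℝ} {f ψ : ℝ → ℝ} {r t : ℝ}

lemma integrableOn_Ici_div_id (hf : IntegrableOn f (Ici t) μ) (ht : 0 < t) :
    IntegrableOn (fun x => f x / x) (Ici t) μ := by
  simp only [div_eq_mul_inv]
  refine hf.mul_bdd (c := t⁻¹) (by fun_prop) ?_
  filter_upwards [ae_restrict_mem measurableSet_Ici] with x hx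
  rw [Real.norm_of_nonneg (inv_nonneg.2 (ht.le.trans hx))]
  exact inv_anti₀ ht hx

lemma setIntegral_Ici_two_mul_div_sub_one_mul (hf : IntegrableOn f (Ici t) μ) (ht : 0 < t) :
    ∫ x in Ici t, (2 * t / x - 1) * f x ∂μ =
      t * (2 * (∫ x in Ici t, f x / x ∂μ) - (1 / t) * ∫ x in Ici t, f x ∂μ) := by
  calc ∫ x in Ici t, (2 * t / x - 1) * f x ∂μ
      = ∫ x in Ici t, (2 * t * (f x / x) - f x) ∂μ := by
        congr with x
        ring
    _ = 2 * t * (∫ x in Ici t, f x / x ∂μ) - ∫ x in Ici t, f x ∂μ := by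
        rw [integral_sub ((integrableOn_Ici_div_id hf ht).const_mul _) hf, integral_const_mul]
    _ = t * (2 * (∫ x in Ici t, f x / x ∂μ) - (1 / t) * ∫ x in Ici t, f x ∂μ) := by
        field_simp

lemma integrableOn_two_mul_div_sub_one_mul [SFinite μ] (hf : IntegrableOn f (Ioi 0) μ) (r : ℝ) :
    IntegrableOn (Function.uncurry fun t x => (2 * t / x - 1) * f x)
      {p | p.1 ∈ Ioc 0 r ∧ p.1 ≤ p.2} (volume.prod μ) := by
  have hs : MeasurableSet {p : ℝ × ℝ | p.1 ∈ Ioc 0 r ∧ p.1 ≤ p.2} :=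
    (measurable_fst measurableSet_Ioc).inter measurableSet_le'
  have hfsnd : IntegrableOn (fun p : ℝ × ℝ => f p.2) (Ioc 0 r ×ˢ Ioi 0) (volume.prod μ) := by
    rw [IntegrableOn, ← Measure.prod_restrict]
    exact Integrable.comp_snd hf _
  refine (hfsnd.mono_set fun p hp => ⟨hp.1, hp.1.1.trans_le hp.2⟩).bdd_mul (c := 1)
    (Measurable.aestronglyMeasurable (by fun_prop)) ?_
  filter_upwards [ae_restrict_mem hs] with p hp
  exact abs_two_mul_div_sub_one_le_one hp.1.1.le hp.2

lemma setIntegral_Ioc_mul_psi [SFinite μ] (hf : IntegrableOn f (Ioi 0) μ)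
    (hψ : ∀ t, 0 < t →
      ψ t = 2 * (∫ x in Ici t, f x / x ∂μ) - (1 / t) * ∫ x in Ici t, f x ∂μ)
    (hr : 0 ≤ r) :
    ∫ t in Ioc 0 r, t * ψ t = ∫ x in Ioi r, (r ^ 2 / x - r) * f x ∂μ := by
  calc ∫ t in Ioc 0 r, t * ψ t
      = ∫ t in Ioc 0 r, ∫ x in Ici t, (2 * t / x - 1) * f x ∂μ :=
        setIntegral_congr_fun measurableSet_Ioc fun t ht => by
          have hft : IntegrableOn f (Ici t) μ := hf.mono_set (Ici_subset_Ioi.2 ht.1)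
          simp only [hψ t ht.1, setIntegral_Ici_two_mul_div_sub_one_mul hft ht.1]
    _ = ∫ x, (∫ t in Ioc 0 r ∩ Iic x, (2 * t / x - 1) * f x) ∂μ :=
        setIntegral_integral_Ici_swap (integrableOn_two_mul_div_sub_one_mul hf r)
    _ = ∫ x, (Ioi r).indicator (fun x => (r ^ 2 / x - r) * f x) x ∂μ := by
        simp only [integral_mul_const, setIntegral_Ioc_inter_Iic_two_mul_div_sub_one hr,
          indicator_mul_left]
    _ = ∫ x in Ioi r, (r ^ 2 / x - r) * f x ∂μ := integral_indicator measurableSet_Ioi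

lemma setIntegral_Ioi_sq_div_sub_mul_nonpos (hf : 0 ≤ᵐ[μ.restrict (Ioi r)] f) (hr : 0 ≤ r) :
    ∫ x in Ioi r, (r ^ 2 / x - r) * f x ∂μ ≤ 0 := by
  refine integral_nonpos_of_ae ?_
  filter_upwards [hf, ae_restrict_mem measurableSet_Ioi] with x hfx hrx
  refine mul_nonpos_of_nonpos_of_nonneg (sub_nonpos.2 ?_) hfx
  rw [div_le_iff₀ (hr.trans_lt hrx), sq]
  exact mul_le_mul_of_nonneg_left (le_of_lt hrx) hr

theorem integral_t_psi_eq_and_nonpos_general [SFinite μ] (hf_int : IntegrableOn f (Ioi 0) μ)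
    (hf_nonneg : 0 ≤ᵐ[μ.restrict (Ioi 0)] f)
    (hψ : ∀ t, 0 < t →
      ψ t = 2 * (∫ x in Ici t, f x / x ∂μ) - (1 / t) * ∫ x in Ici t, f x ∂μ)
    (hr : 0 ≤ r) :
    (∫ t in Ioc 0 r, t * ψ t) = (∫ x in Ioi r, (r ^ 2 / x - r) * f x ∂μ) ∧
      (∫ t in Ioc 0 r, t * ψ t) ≤ 0 := by
  have hψ_integral := setIntegral_Ioc_mul_psi hf_int hψ hr
  have hf_nonneg_tail : 0 ≤ᵐ[μ.restrict (Ioi r)] f :=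
    ae_restrict_of_ae_restrict_of_subset (Ioi_subset_Ioi hr) hf_nonneg
  exact ⟨hψ_integral, hψ_integral.trans_le
    (setIntegral_Ioi_sq_div_sub_mul_nonpos hf_nonneg_tail hr)⟩

end Tail

/-- For a probability density `f` supported on `[l,h]` with `0 < l ≤ h < ∞`, and
`ψ t = 2∫_{t'≥t} f t'/t' dt' − (1/t)·∫_{t'≥t} f t' dt'`, for every `r > 0` one has
`∫_{0<t≤r} t·ψ t dt = ∫_{t'>r} (r²/t' − r)·f t' dt'`, and in particular
`∫_{0<t≤r} t·ψ t dt ≤ 0`. -/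
theorem integral_t_psi_eq_and_nonpos
    (f : ℝ → ℝ) (l h : ℝ) (hl : 0 < l) (hlh : l ≤ h)
    (hf_nonneg : ∀ t, 0 ≤ f t)
    (hf_supp : Function.support f = Icc l h)
    (hf_int : Integrable f)
    (hf_prob : ∫ t, f t = 1)
    (ψ : ℝ → ℝ)
    (hψ : ∀ t : ℝ, 0 < t →
      ψ t = 2 * (∫ t' in Ici t, f t' / t') - (1 / t) * ∫ t' in Ici t, f t') :
    ∀ r : ℝ, 0 < r →
      (∫ t in Ioc (0:ℝ) r, t * ψ t) = (∫ t' in Ioi r, (r ^ 2 / t' - r) * f t') ∧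
      (∫ t in Ioc (0:ℝ) r, t * ψ t) ≤ 0 := by
  exact fun r hr => integral_t_psi_eq_and_nonpos_general hf_int.integrableOn
    (ae_of_all _ hf_nonneg) hψ hr.le
end

section
/- For all real numbers z ≥ e and all y ≥ 1, it holds that (ln y)·(z − y) ≤ z·(ln z − ln ln z + 1); consequently, for any H > 1, sup_{y ∈ [1,H]} (ln y / ln H)·(z − y) ≤ z·(ln z − ln ln z + 1)/ln H. -/
/-!
Write `L = log z`. For large `z` the maximiser of `y ↦ log y * (z - y)` is close to `z / L`, so one
splits `log y = log (z / L) + log (y / (z / L))`. By `log x ≤ x / 2`, the second term contributes at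
most `y * L / 2` when `y ≤ z`. The first contributes `z * log (z / L) - y * (L - log L)`, and
`L - log L ≥ L / 2`.
-/

theorem log_le_half_self {x : ℝ} (hx : 0 < x) : Real.log x ≤ x / 2 := by
  have hhalf : Real.log (x / 2) ≤ x / 2 - 1 := Real.log_le_sub_one_of_pos (half_pos hx)
  have htwo : Real.log 2 ≤ 2 - 1 := Real.log_le_sub_one_of_pos two_pos
  rw [Real.log_div hx.ne' two_ne_zero] at hhalf
  linarith

theorem log_mul_sub_le_of_le {y z : ℝ} (hz : 1 < z) (hy : 0 < y) (hyz : y ≤ z) :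
    Real.log y * (z - y) ≤ z * (Real.log z - Real.log (Real.log z)) := by
  have hz₀ : 0 < z := one_pos.trans hz
  set L := Real.log z with hL
  have hL₀ : 0 < L := Real.log_pos hz
  have hlog_L : Real.log L ≤ L / 2 := log_le_half_self hL₀
  have hlog_y : Real.log y ≤ L - Real.log L + y * L / z / 2 := by
    have hratio : Real.log (y * L / z) ≤ y * L / z / 2 := log_le_half_self (by positivity)
    rw [Real.log_div (by positivity) hz₀.ne', Real.log_mul hy.ne' hL₀.ne', ← hL] at hratio
    linarith
  calc Real.log y * (z - y)
      ≤ (L - Real.log L + y * L / z / 2) * (z - y) :=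
        mul_le_mul_of_nonneg_right hlog_y (sub_nonneg.2 hyz)
    _ = z * (L - Real.log L) - y * (L / 2 - Real.log L) - y ^ 2 * L / z / 2 := by
        field_simp
        ring
    _ ≤ z * (L - Real.log L) := by
        have hlinear : 0 ≤ y * (L / 2 - Real.log L) := mul_nonneg hy.le (sub_nonneg.2 hlog_L)
        have hsquare : 0 ≤ y ^ 2 * L / z / 2 := by positivity
        linarith

theorem log_mul_sub_le {y z : ℝ} (hz : 1 < z) (hy : 0 < y) :
    Real.log y * (z - y) ≤ z * (Real.log z - Real.log (Real.log z)) := by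
  rcases le_total y z with hyz | hzy
  · exact log_mul_sub_le_of_le hz hy hyz
  · calc Real.log y * (z - y)
        ≤ 0 := mul_nonpos_of_nonneg_of_nonpos (Real.log_nonneg (hz.le.trans hzy))
          (sub_nonpos.2 hzy)
      _ ≤ z * (Real.log z - Real.log (Real.log z)) :=
        mul_nonneg (by linarith) (sub_nonneg.2 (Real.log_le_self (Real.log_pos hz).le))

theorem log_mul_sub_le_of_exp_le_general (z : ℝ) (hz : 1 < z) :
    (∀ y : ℝ, 0 < y →
      Real.log y * (z - y) ≤ z * (Real.log z - Real.log (Real.log z))) ∧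
    (∀ H : ℝ, 1 < H →
      sSup ((fun y : ℝ => Real.log y / Real.log H * (z - y)) '' Set.Icc 1 H) ≤
        z * (Real.log z - Real.log (Real.log z)) / Real.log H) := by
  refine ⟨fun y hy => log_mul_sub_le hz hy, fun H hH => ?_⟩
  refine csSup_le ((Set.nonempty_Icc.2 hH.le).image _) ?_
  rintro _ ⟨y, hy, rfl⟩
  calc Real.log y / Real.log H * (z - y)
      = Real.log y * (z - y) / Real.log H := div_mul_eq_mul_div _ _ _
    _ ≤ z * (Real.log z - Real.log (Real.log z)) / Real.log H :=
      div_le_div_of_nonneg_right (log_mul_sub_le hz (one_pos.trans_le hy.1)) (Real.log_pos hH).le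

/-- For all reals `z ≥ e` and `y ≥ 1`, `(ln y)·(z − y) ≤ z·(ln z − ln ln z + 1)`;
consequently, for any `H > 1`,
`sup_{y ∈ [1,H]} (ln y / ln H)·(z − y) ≤ z·(ln z − ln ln z + 1)/ln H`. -/
theorem log_mul_sub_le_of_exp_le (z : ℝ) (hz : Real.exp 1 ≤ z) :
    (∀ y : ℝ, 1 ≤ y →
      Real.log y * (z - y) ≤ z * (Real.log z - Real.log (Real.log z) + 1)) ∧
    (∀ H : ℝ, 1 < H →
      sSup ((fun y : ℝ => Real.log y / Real.log H * (z - y)) '' Set.Icc 1 H) ≤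
        z * (Real.log z - Real.log (Real.log z) + 1) / Real.log H) := by
  have hz₁ : 1 < z := (Real.one_lt_exp_iff.2 one_pos).trans_le hz
  obtain ⟨hpoint, hsup⟩ := log_mul_sub_le_of_exp_le_general z hz₁
  have hbound : z * (Real.log z - Real.log (Real.log z)) ≤
      z * (Real.log z - Real.log (Real.log z) + 1) := by linarith
  exact ⟨fun y hy => (hpoint y (one_pos.trans_le hy)).trans hbound, fun H hH =>
    (hsup H hH).trans (div_le_div_of_nonneg_right hbound (Real.log_pos hH).le)⟩
end
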